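/- arXiv:math/0504429 — 2 statements merged into one kernel-verified Lean document; each statement's English description precedes it below -/
import Mathlib

section
/- Let V be a set of monomials of degree d in K[x_1,…,x_n]. If V is a Gotzmann set, then MV ⊆ M^{d+1} is also a Gotzmann set, i.e. |M(MV)| = |MV|^{<n−1>}. -/
/-!
The proof is combinatorial.  Let `L` be the lex segment of degree `d` with `|L| = |V|`.
Counting the elements of a lex segment by the exponent of `x_1` gives
`|ML| = |L|^{<n-1>}` (`card_shad_lex`), and `ML` is again a lex segment.  So `V` is Gotzmann
iff `|MV| = |ML|`, and the claim is that then `|M(MV)| = |M(ML)|`.  The inequality `≥` is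
Macaulay's inequality for `MV` and `ML`.  The inequality `≤` is the persistence statement.

Persistence is obtained by proving more, by induction on the number of variables (`Mac`).
Consider the pairs `(w, x_c)` with `w ∈ MV`, identifying `(v x_a, x_c)` with `(v x_c, x_a)`
for `v ∈ V`.  The number of classes, the size of the formal second shadow of `V`, is at least
`|M(MV)|`, since the product `w x_c` is an invariant of the class.  `Mac n` says that
`|ML| ≤ |MV|`, and that in case of equality the number of classes for `V` is at most
`|M(ML)|`.

* Compression at `x_i` replaces each level `{v ∈ V : v_i = k}` by the lex segment of the same
  size in the remaining variables.  By induction the shadow does not grow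
  (`IsComp.card_shad_le`).  If its size is unchanged, then at each `k` either the level or its
  predecessor dominates, in the same way for `V` and for the compressed set, and a count level
  by level shows that the formal second shadow does not shrink (`IsComp.phiLE`).
* Compression at a level that is not lex moves `V` strictly up in the lexicographic order
  (`IsComp.sum_rho_lt`), so after finitely many steps all levels are lex.  In at least three
  variables the set is then stable (`stable_of_lev`), and for a stable set the shadow and the
  formal second shadow are controlled by the part `W_0` not involving the last variable
  (`Stable.card_shad`, `Stable.phiLE`).  Since `W_0` contains the corresponding part of `L`
  (`Stable.lev_subset`), the induction hypothesis in one variable less finishes the step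
  (`Mac.of_stable`).
* In two variables, where compression is vacuous, the formal second shadow is bounded by
  inclusion and exclusion (`mac_two`).
-/

open Finset

/-- `macUp n h` is `h^{<n>}`, computed via the greedy (Macaulay) binomial
representation `h = C(a_n, n) + C(a_{n-1}, n-1) + ⋯` (equivalently
`h = C(h(n)+n, n) + ⋯ + C(h(i)+i, i)` with `h(n) ≥ ⋯ ≥ h(i) ≥ 0`), giving
`h^{<n>} = C(a_n+1, n) + C(a_{n-1}+1, n-1) + ⋯`; `macUp n 0 = 0`, `macUp 0 1 = 1`. -/
def macUp : ℕ → ℕ → ℕ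
  | 0, h => h
  | n+1, h =>
    if h = 0 then 0
    else
      let a := Nat.findGreatest (fun a => Nat.choose a (n+1) ≤ h) (h + n + 1)
      Nat.choose (a+1) (n+1) + macUp n (h - Nat.choose a (n+1))
/-- Monomials in `K[x_1,…,x_n]` are identified with their exponent vectors
`Fin n → ℕ`; the degree of `v` is `∑ i, v i`.  `shad V` is the set
`MV = {x_j v : v ∈ V, 1 ≤ j ≤ n}`. -/
def shad {n : ℕ} (V : Finset (Fin n → ℕ)) : Finset (Fin n → ℕ) :=
  (Finset.univ ×ˢ V).image fun p => p.2 + Pi.single p.1 1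

/-! ### Formal second shadows -/

/-- `V` consists of monomials of degree `d`. -/
def Hom {n : ℕ} (d : ℕ) (V : Finset (Fin n → ℕ)) : Prop := ∀ v ∈ V, ∑ i, v i = d

/-- `V` is closed upwards, within each degree, in the lexicographic order with
`x_1 > ⋯ > x_n`.  For a homogeneous `V` this says that `V` is a lex segment. -/
def IsLex {n : ℕ} (V : Finset (Fin n → ℕ)) : Prop :=
  ∀ v ∈ V, ∀ u : Fin n → ℕ, ∑ i, u i = ∑ i, v i → toLex v ≤ toLex u → u ∈ V

/-- The monomial in `n + 1` variables with exponent `j` at the variable `i` and the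
exponents `w` at the remaining variables. -/
def ins {n : ℕ} (i : Fin (n + 1)) (j : ℕ) (w : Fin n → ℕ) : Fin (n + 1) → ℕ :=
  Fin.insertNth (α := fun _ => ℕ) i j w

/-- The level of `V` at `x_i`-exponent `k - s`, with `x_i` divided out; it is empty
when `k < s`.  The shift `s` avoids truncated subtraction in the index. -/
def lev {n : ℕ} (i : Fin (n + 1)) (s k : ℕ) (V : Finset (Fin (n + 1) → ℕ)) :
    Finset (Fin n → ℕ) :=
  (V.filter fun v => v i + s = k).image fun v b => v (i.succAbove b)

/-- A labelling `l` of the pairs `(w, x_c)`, with `w ∈ shad V`, that respects the linear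
relations between the elements of `V`: the pairs `(v x_a, x_c)` and `(v x_c, x_a)` have the
same label. -/
def LInv {n : ℕ} (V : Finset (Fin n → ℕ)) (l : (Fin n → ℕ) → Fin n → ℕ) : Prop :=
  ∀ v ∈ V, ∀ a c, l (v + Pi.single a 1) c = l (v + Pi.single c 1) a

/-- The labelled products `(w x_c, l w c)` with `w ∈ shad V`. -/
def img {n : ℕ} (V : Finset (Fin n → ℕ)) (l : (Fin n → ℕ) → Fin n → ℕ) :
    Finset ((Fin n → ℕ) × ℕ) :=
  ((shad V) ×ˢ Finset.univ).image fun p => (p.1 + Pi.single p.2 1, l p.1 p.2)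

/-- The formal second shadow of `V` has at most `N` elements.  The formal second shadow is
the set of pairs `(w, x_c)` with `w ∈ shad V`, modulo the equivalence relation generated by
`(v x_a, x_c) ~ (v x_c, x_a)` for `v ∈ V`.  The product `w x_c` is constant on classes, and
the number of classes is the maximum of `(img V l).card` over all invariant labellings `l`,
which is how the bound is expressed here. -/
def PhiLE {n : ℕ} (V : Finset (Fin n → ℕ)) (N : ℕ) : Prop :=
  ∀ l, LInv V l → (img V l).card ≤ N

section basics
variable {n : ℕ}

lemma mem_shad {V : Finset (Fin n → ℕ)} {u : Fin n → ℕ} :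
    u ∈ shad V ↔ ∃ v ∈ V, ∃ a, v + Pi.single a 1 = u := by
  simp only [shad, mem_image, mem_product, mem_univ, true_and, Prod.exists]
  constructor
  · rintro ⟨a, v, hv, h⟩; exact ⟨v, hv, a, h⟩
  · rintro ⟨v, hv, a, h⟩; exact ⟨a, v, hv, h⟩

lemma add_mem_shad {V : Finset (Fin n → ℕ)} {v : Fin n → ℕ} (hv : v ∈ V) (a : Fin n) :
    v + Pi.single a 1 ∈ shad V := mem_shad.2 ⟨v, hv, a, rfl⟩

lemma shad_mono {V W : Finset (Fin n → ℕ)} (h : V ⊆ W) : shad V ⊆ shad W := by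
  intro u hu
  obtain ⟨v, hv, a, rfl⟩ := mem_shad.1 hu
  exact add_mem_shad (h hv) a

lemma shad_empty : shad (∅ : Finset (Fin n → ℕ)) = ∅ := by simp [shad]

lemma sum_add_single (v : Fin n → ℕ) (a : Fin n) :
    ∑ i, (v + Pi.single a 1 : Fin n → ℕ) i = ∑ i, v i + 1 := by
  simp [Finset.sum_add_distrib]

lemma Hom.shad {d : ℕ} {V : Finset (Fin n → ℕ)} (h : Hom d V) : Hom (d + 1) (shad V) := by
  intro u hu
  obtain ⟨v, hv, a, rfl⟩ := mem_shad.1 hu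
  rw [sum_add_single, h v hv]

lemma Hom.mono {d : ℕ} {V W : Finset (Fin n → ℕ)} (h : Hom d W) (hs : V ⊆ W) : Hom d V :=
  fun v hv => h v (hs hv)

lemma mem_img {V : Finset (Fin n → ℕ)} {l} {p : (Fin n → ℕ) × ℕ} :
    p ∈ img V l ↔ ∃ w ∈ shad V, ∃ c, (w + Pi.single c 1, l w c) = p := by
  simp only [img, mem_image, mem_product, mem_univ, and_true, Prod.exists]
  constructor
  · rintro ⟨w, c, hw, h⟩; exact ⟨w, hw, c, h⟩
  · rintro ⟨w, hw, c, h⟩; exact ⟨w, c, hw, h⟩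

/-- The constant labelling shows that the formal second shadow surjects onto the second
shadow. -/
lemma PhiLE.card_le {V : Finset (Fin n → ℕ)} {N : ℕ} (h : PhiLE V N) :
    (shad (shad V)).card ≤ N := by
  refine le_trans ?_ (h (fun _ _ => 0) (fun _ _ _ _ => rfl))
  refine Finset.card_le_card_of_injOn (fun u => (u, 0)) ?_ ?_
  · intro u hu
    obtain ⟨w, hw, c, rfl⟩ := mem_shad.1 (Finset.mem_coe.1 hu)
    exact Finset.mem_coe.2 (mem_img.2 ⟨w, hw, c, rfl⟩)
  · intro a _ b _ h
    simpa using h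

/-! ### The lexicographic order -/

lemma lex_lt_iff {u v : Fin n → ℕ} :
    toLex u < toLex v ↔ ∃ j, (∀ i < j, u i = v i) ∧ u j < v j := Iff.rfl

/-- If `v` dominates `u` up to the variable `j`, then `u ≤ v` in the lexicographic order as
soon as either the domination is strict somewhere or `v` involves no later variable. -/
lemma lex_le_of {u v : Fin n → ℕ} (hd : ∑ i, v i = ∑ i, u i) (j : Fin n)
    (h : ∀ i ≤ j, u i ≤ v i) (h2 : (∃ i ≤ j, u i < v i) ∨ ∀ i, j < i → v i = 0) :
    toLex u ≤ toLex v := by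
  by_contra hc
  obtain ⟨i0, he, hlt⟩ := lex_lt_iff.1 (not_le.1 hc)
  have hj : j < i0 := by
    by_contra h'
    exact absurd (h i0 (not_lt.1 h')) (not_le.2 hlt)
  rcases h2 with ⟨i, hi, hi2⟩ | h2
  · have := he i (lt_of_le_of_lt hi hj)
    omega
  · have : ∑ i, v i < ∑ i, u i := by
      refine Finset.sum_lt_sum (fun i _ => ?_) ⟨i0, mem_univ _, hlt⟩
      rcases lt_or_ge i i0 with h3 | h3
      · exact (he i h3).le
      · rw [h2 i (lt_of_lt_of_le hj h3)]; exact Nat.zero_le _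
    omega

lemma exists_sub_single {v : Fin n → ℕ} {b : Fin n} (h : 0 < v b) :
    ∃ w : Fin n → ℕ, v = w + Pi.single b 1 := by
  refine ⟨fun i => if i = b then v i - 1 else v i, ?_⟩
  funext i
  by_cases hi : i = b
  · subst hi; simp; omega
  · simp [hi]

lemma IsLex.shad {V : Finset (Fin n → ℕ)} (hV : IsLex V) : IsLex (shad V) := by
  intro u hu u' hd hle
  obtain ⟨v, hv, a, rfl⟩ := mem_shad.1 hu
  rcases hle.eq_or_lt with h | hlt
  · have h : v + Pi.single a 1 = u' := toLex.injective h
    exact h ▸ hu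
  obtain ⟨j, he, hj⟩ := lex_lt_iff.1 hlt
  have hvle : ∀ i, v i ≤ (v + Pi.single a 1 : Fin n → ℕ) i := fun i => by simp
  rw [sum_add_single] at hd
  -- remove from `u'` the last variable that occurs in it
  by_cases hb : ∃ b, j < b ∧ 0 < u' b
  · obtain ⟨b, hjb, hb⟩ := hb
    obtain ⟨w, rfl⟩ := exists_sub_single hb
    rw [sum_add_single] at hd
    refine mem_shad.2 ⟨w, hV v hv w (by omega) ?_, b, rfl⟩
    have hw : ∀ i ≤ j, (w + Pi.single b 1 : Fin n → ℕ) i = w i := fun i hi => by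
      simp [(lt_of_le_of_lt hi hjb).ne]
    refine lex_le_of (by omega) j (fun i hi => ?_) (Or.inl ⟨j, le_rfl, ?_⟩)
    · rcases hi.eq_or_lt with h | h
      · subst h; have := hvle i; have := hw i le_rfl; omega
      · have := hvle i; have := hw i hi; have := he i h; omega
    · have := hvle j; have := hw j le_rfl; omega
  · push Not at hb
    obtain ⟨w, rfl⟩ := exists_sub_single (v := u') (b := j) (by omega)
    rw [sum_add_single] at hd
    refine mem_shad.2 ⟨w, hV v hv w (by omega) ?_, j, rfl⟩
    refine lex_le_of (by omega) j (fun i hi => ?_) (Or.inr fun i hi => ?_)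
    · rcases hi.eq_or_lt with h | h
      · subst h
        have := hvle i
        have h3 : (w + Pi.single i 1 : Fin n → ℕ) i = w i + 1 := by simp
        omega
      · have := hvle i
        have h3 : (w + Pi.single j 1 : Fin n → ℕ) i = w i := by simp [h.ne]
        have := he i h; omega
    · have := hb i hi
      have h3 : (w + Pi.single j 1 : Fin n → ℕ) i = w i := by simp [hi.ne']
      omega

lemma IsLex.nested {d : ℕ} {A B : Finset (Fin n → ℕ)} (hA : IsLex A) (hB : IsLex B)
    (dA : Hom d A) (dB : Hom d B) : A ⊆ B ∨ B ⊆ A := by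
  by_contra h
  push Not at h
  obtain ⟨h1, h2⟩ := h
  obtain ⟨a, ha, hab⟩ := Finset.not_subset.1 h1
  obtain ⟨b, hb, hba⟩ := Finset.not_subset.1 h2
  rcases le_total (toLex a) (toLex b) with h | h
  · exact hba (hA a ha b (by rw [dA a ha, dB b hb]) h)
  · exact hab (hB b hb a (by rw [dA a ha, dB b hb]) h)

lemma IsLex.subset_of_card {d : ℕ} {A B : Finset (Fin n → ℕ)} (hA : IsLex A) (hB : IsLex B)
    (dA : Hom d A) (dB : Hom d B) (h : A.card ≤ B.card) : A ⊆ B := by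
  rcases hA.nested hB dA dB with h1 | h1
  · exact h1
  · exact (Finset.eq_of_subset_of_card_le h1 h).ge

lemma mem_full {d : ℕ} {v : Fin n → ℕ} :
    v ∈ Finset.piAntidiag (Finset.univ : Finset (Fin n)) d ↔ ∑ i, v i = d := by simp

/-- In every degree there are lex segments of every possible cardinality. -/
lemma exists_lex {d : ℕ} {V : Finset (Fin n → ℕ)} (hV : Hom d V) :
    ∃ L : Finset (Fin n → ℕ), Hom d L ∧ IsLex L ∧ L.card = V.card := by
  have key : ∀ c, c ≤ (Finset.piAntidiag (Finset.univ : Finset (Fin n)) d).card →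
      ∃ L : Finset (Fin n → ℕ), Hom d L ∧ IsLex L ∧ L.card = c := by
    intro c
    induction c with
    | zero => intro _; exact ⟨∅, by simp [Hom], by simp [IsLex], rfl⟩
    | succ c ih =>
      intro hc
      obtain ⟨L, dL, hL, hcard⟩ := ih (by omega)
      have hne : (Finset.piAntidiag (Finset.univ : Finset (Fin n)) d \ L).Nonempty := by
        rw [Finset.nonempty_iff_ne_empty]
        intro h
        have := Finset.card_le_card (Finset.sdiff_eq_empty_iff_subset.1 h)
        omega
      obtain ⟨m, hm, hmax⟩ := Finset.exists_max_image _ (fun v => toLex v) hne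
      rw [mem_sdiff, mem_full] at hm
      refine ⟨insert m L, ?_, ?_, by rw [card_insert_of_notMem hm.2, hcard]⟩
      · intro v hv
        rcases mem_insert.1 hv with rfl | h
        · exact hm.1
        · exact dL v h
      · intro v hv u hd hle
        rcases mem_insert.1 hv with rfl | h
        · by_cases hu : u ∈ L
          · exact mem_insert_of_mem hu
          · have := hmax u (by rw [mem_sdiff, mem_full]; exact ⟨by rw [hd, hm.1], hu⟩)
            have h3 : u = v := toLex.injective (le_antisymm this hle)
            rw [h3]; exact mem_insert_self _ _
        · exact mem_insert_of_mem (hL v h u hd hle)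
  exact key _ (Finset.card_le_card fun v hv => mem_full.2 (hV v hv))

end basics

/-! ### Levels -/

section levels
variable {n : ℕ}

@[simp] lemma ins_same (i : Fin (n + 1)) (j : ℕ) (w : Fin n → ℕ) : ins i j w i = j := by
  simp [ins]

@[simp] lemma ins_succAbove (i : Fin (n + 1)) (j : ℕ) (w : Fin n → ℕ) (b : Fin n) :
    ins i j w (i.succAbove b) = w b := by
  simp [ins]

lemma ins_ext {i : Fin (n + 1)} {u v : Fin (n + 1) → ℕ} (h : u i = v i)
    (h2 : ∀ b, u (i.succAbove b) = v (i.succAbove b)) : u = v := by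
  funext a
  rcases Fin.eq_self_or_eq_succAbove i a with rfl | ⟨b, rfl⟩
  · exact h
  · exact h2 b

lemma ins_eta (i : Fin (n + 1)) (v : Fin (n + 1) → ℕ) :
    ins i (v i) (fun b => v (i.succAbove b)) = v :=
  ins_ext (i := i) (by simp) (by simp)

lemma exists_ins (i : Fin (n + 1)) (v : Fin (n + 1) → ℕ) : ∃ j w, v = ins i j w :=
  ⟨_, _, (ins_eta i v).symm⟩

lemma ins_inj {i : Fin (n + 1)} {j j' : ℕ} {w w' : Fin n → ℕ} :
    ins i j w = ins i j' w' ↔ j = j' ∧ w = w' := by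
  constructor
  · intro h
    refine ⟨by simpa using congrFun h i, funext fun b => by
      simpa using congrFun h (i.succAbove b)⟩
  · rintro ⟨rfl, rfl⟩; rfl

lemma ins_add_same (i : Fin (n + 1)) (j : ℕ) (w : Fin n → ℕ) :
    ins i j w + Pi.single i 1 = ins i (j + 1) w :=
  ins_ext (i := i) (by simp) (fun b => by simp)

lemma ins_add_succAbove (i : Fin (n + 1)) (j : ℕ) (w : Fin n → ℕ) (b : Fin n) :
    ins i j w + Pi.single (i.succAbove b) 1 = ins i j (w + Pi.single b 1) :=
  ins_ext (i := i) (by simp) (fun c => by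
    simp [Pi.single_apply, Fin.succAbove_right_injective.eq_iff])

lemma sum_ins (i : Fin (n + 1)) (j : ℕ) (w : Fin n → ℕ) :
    ∑ a, ins i j w a = j + ∑ b, w b := by
  rw [Fin.sum_univ_succAbove _ i]; simp

lemma ins_lt {i : Fin (n + 1)} {j : ℕ} {u w : Fin n → ℕ} (h : toLex u < toLex w) :
    toLex (ins i j u) < toLex (ins i j w) := by
  obtain ⟨b, h1, h2⟩ := lex_lt_iff.1 h
  refine lex_lt_iff.2 ⟨i.succAbove b, fun a ha => ?_, by simpa using h2⟩
  rcases Fin.eq_self_or_eq_succAbove i a with rfl | ⟨c, rfl⟩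
  · simp
  · simpa using h1 c ((Fin.strictMono_succAbove i).lt_iff_lt.1 ha)

lemma ins_le_iff {i : Fin (n + 1)} {j : ℕ} {u w : Fin n → ℕ} :
    toLex (ins i j u) ≤ toLex (ins i j w) ↔ toLex u ≤ toLex w := by
  constructor
  · intro h
    by_contra hc
    exact absurd h (not_le.2 (ins_lt (not_le.1 hc)))
  · intro h
    rcases h.eq_or_lt with h | h
    · rw [toLex.injective h]
    · exact (ins_lt h).le

lemma mem_lev {i : Fin (n + 1)} {s k : ℕ} {V : Finset (Fin (n + 1) → ℕ)} {w : Fin n → ℕ} :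
    w ∈ lev i s k V ↔ ∃ j, j + s = k ∧ ins i j w ∈ V := by
  simp only [lev, mem_image, mem_filter]
  constructor
  · rintro ⟨v, ⟨hv, hk⟩, rfl⟩
    exact ⟨v i, hk, by rwa [ins_eta]⟩
  · rintro ⟨j, hj, h⟩
    exact ⟨_, ⟨h, by simpa using hj⟩, by simp⟩

lemma mem_lev_zero {i : Fin (n + 1)} {k : ℕ} {V : Finset (Fin (n + 1) → ℕ)} {w : Fin n → ℕ} :
    w ∈ lev i 0 k V ↔ ins i k w ∈ V := by simp [mem_lev]

lemma lev_add (i : Fin (n + 1)) (s k : ℕ) (V : Finset (Fin (n + 1) → ℕ)) :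
    lev i s (k + s) V = lev i 0 k V := by
  ext w; simp [mem_lev]

lemma lev_of_lt (i : Fin (n + 1)) {s k : ℕ} (h : k < s) (V : Finset (Fin (n + 1) → ℕ)) :
    lev i s k V = ∅ := by
  ext w; simp only [mem_lev, notMem_empty, iff_false]; rintro ⟨j, hj, _⟩; omega

lemma Hom.lev {d : ℕ} {V : Finset (Fin (n + 1) → ℕ)} (h : Hom d V) (i : Fin (n + 1)) (s k : ℕ) :
    Hom (d + s - k) (lev i s k V) := by
  intro w hw
  obtain ⟨j, hj, hw⟩ := mem_lev.1 hw
  have := h _ hw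
  rw [sum_ins] at this
  omega

lemma lev_shad (i : Fin (n + 1)) (s k : ℕ) (V : Finset (Fin (n + 1) → ℕ)) :
    lev i s k (shad V) = shad (lev i s k V) ∪ lev i (s + 1) k V := by
  ext w
  rw [mem_union]
  constructor
  · intro h
    obtain ⟨j, hj, h⟩ := mem_lev.1 h
    obtain ⟨v, hv, a, hva⟩ := mem_shad.1 h
    obtain ⟨j', w', rfl⟩ := exists_ins i v
    rcases Fin.eq_self_or_eq_succAbove i a with rfl | ⟨b, rfl⟩
    · rw [ins_add_same, ins_inj] at hva
      obtain ⟨h1, rfl⟩ := hva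
      exact Or.inr (mem_lev.2 ⟨j', by omega, hv⟩)
    · rw [ins_add_succAbove, ins_inj] at hva
      obtain ⟨rfl, rfl⟩ := hva
      exact Or.inl (add_mem_shad (mem_lev.2 ⟨j', hj, hv⟩) b)
  · rintro (h | h)
    · obtain ⟨w', hw', b, rfl⟩ := mem_shad.1 h
      obtain ⟨j, hj, hw'⟩ := mem_lev.1 hw'
      refine mem_lev.2 ⟨j, hj, ?_⟩
      rw [← ins_add_succAbove]
      exact add_mem_shad hw' _
    · obtain ⟨j, hj, hw'⟩ := mem_lev.1 h
      refine mem_lev.2 ⟨j + 1, by omega, ?_⟩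
      rw [← ins_add_same]
      exact add_mem_shad hw' _

lemma ins_injective (i : Fin (n + 1)) (k : ℕ) : Function.Injective (ins i k) :=
  fun _ _ h => (ins_inj.1 h).2

lemma lev_image (i : Fin (n + 1)) (k : ℕ) (V : Finset (Fin (n + 1) → ℕ)) :
    (lev i 0 k V).image (ins i k) = V.filter fun v => v i = k := by
  ext v
  simp only [mem_image, mem_filter, mem_lev_zero]
  constructor
  · rintro ⟨w, hw, rfl⟩; exact ⟨hw, by simp⟩
  · rintro ⟨hv, rfl⟩; exact ⟨_, by rwa [ins_eta], ins_eta i v⟩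

lemma sum_lev {M : Type*} [AddCommMonoid M] (i : Fin (n + 1)) {V : Finset (Fin (n + 1) → ℕ)}
    {d N : ℕ} (hV : Hom d V) (hN : d < N) (f : (Fin (n + 1) → ℕ) → M) :
    ∑ v ∈ V, f v = ∑ k ∈ range N, ∑ w ∈ lev i 0 k V, f (ins i k w) := by
  rw [← Finset.sum_fiberwise_of_maps_to (s := V) (t := range N) (g := fun v => v i)]
  · refine Finset.sum_congr rfl fun k _ => ?_
    rw [← lev_image, Finset.sum_image fun _ _ _ _ h => ins_injective i k h]
  · intro v hv
    have := hV v hv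
    rw [Finset.mem_range]
    have : v i ≤ ∑ a, v a := Finset.single_le_sum (fun _ _ => Nat.zero_le _) (mem_univ i)
    omega

lemma card_lev (i : Fin (n + 1)) {V : Finset (Fin (n + 1) → ℕ)}
    {d N : ℕ} (hV : Hom d V) (hN : d < N) :
    V.card = ∑ k ∈ range N, (lev i 0 k V).card := by
  simpa using sum_lev i hV hN (fun _ => (1 : ℕ))

lemma card_img_lev (i : Fin (n + 1)) {V : Finset (Fin (n + 1) → ℕ)}
    {d N : ℕ} (hV : Hom d V) (hN : d + 2 < N) (l) :
    (img V l).card = ∑ k ∈ range N, ((img V l).filter fun p => p.1 i = k).card := by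
  refine Finset.card_eq_sum_card_fiberwise fun p hp => ?_
  obtain ⟨w, hw, c, rfl⟩ := mem_img.1 (mem_coe.1 hp)
  have h1 := hV.shad.shad _ (add_mem_shad hw c)
  have : (w + Pi.single c 1 : Fin (n + 1) → ℕ) i ≤ ∑ a, (w + Pi.single c 1 : Fin (n + 1) → ℕ) a :=
    Finset.single_le_sum (fun _ _ => Nat.zero_le _) (mem_univ i)
  rw [coe_range]
  change (w + Pi.single c 1 : Fin (n + 1) → ℕ) i < N
  omega

end levels

/-! ### The formal second shadow, level by level -/

section phi
variable {n : ℕ}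

/-- Levels of the formal second shadow at which the preceding level of `V` lies in the shadow
of the current one: the classes not coming from the current level are represented by the
elements two levels down that are not in the shadow of the level in between. -/
lemma img_le_of_prev_subset {V : Finset (Fin (n + 1) → ℕ)} {i : Fin (n + 1)} {k N : ℕ}
    (h : lev i 1 k V ⊆ shad (lev i 0 k V)) (hP : PhiLE (lev i 0 k V) N) {l} (hl : LInv V l) :
    ((img V l).filter fun p => p.1 i = k).card ≤
      N + (lev i 2 k V \ shad (lev i 1 k V)).card := by
  have hl' : LInv (lev i 0 k V) (fun w b => l (ins i k w) (i.succAbove b)) := by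
    intro v hv a c
    have := hl _ (mem_lev_zero.1 hv) (i.succAbove a) (i.succAbove c)
    simpa only [ins_add_succAbove] using this
  have hN := hP _ hl'
  refine le_trans (Finset.card_le_card (t := (img (lev i 0 k V)
    (fun w b => l (ins i k w) (i.succAbove b))).image (fun p => (ins i k p.1, p.2)) ∪
    (lev i 2 k V \ shad (lev i 1 k V)).image
      (fun u => (ins i k u, l (ins i (k - 1) u) i))) ?_)
    ((card_union_le _ _).trans (add_le_add (card_image_le.trans hN) card_image_le))
  intro p hp
  obtain ⟨hp, hk⟩ := mem_filter.1 hp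
  obtain ⟨w, hw, c, rfl⟩ := mem_img.1 hp
  obtain ⟨j, w', rfl⟩ := exists_ins i w
  rw [mem_union]
  rcases Fin.eq_self_or_eq_succAbove i c with rfl | ⟨b, rfl⟩
  · simp only [ins_add_same, ins_same] at hk ⊢
    subst hk
    have h2 : w' ∈ lev c 1 (j + 1) (shad V) := mem_lev.2 ⟨j, rfl, hw⟩
    rw [lev_shad] at h2
    by_cases h3 : w' ∈ shad (lev c 1 (j + 1) V)
    · left
      obtain ⟨v, hv, b, rfl⟩ := mem_shad.1 h3
      refine mem_image.2 ⟨_, mem_img.2 ⟨v, h hv, b, rfl⟩, ?_⟩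
      obtain ⟨j', hj', hvV⟩ := mem_lev.1 hv
      obtain rfl : j' = j := by omega
      have := hl _ hvV c (c.succAbove b)
      rw [ins_add_same, ins_add_succAbove] at this
      rw [this]
    · right
      refine mem_image.2 ⟨w', mem_sdiff.2 ⟨(mem_union.1 h2).resolve_left h3, h3⟩, ?_⟩
      simp
  · left
    simp only [ins_add_succAbove, ins_same] at hk ⊢
    subst hk
    have h2 : w' ∈ lev i 0 j (shad V) := mem_lev_zero.2 hw
    rw [lev_shad, union_eq_left.2 h] at h2
    exact mem_image.2 ⟨_, mem_img.2 ⟨w', h2, b, rfl⟩, rfl⟩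

/-- Levels of the formal second shadow at which the shadow of the current level of `V` lies in
the preceding one: every class is represented by a pair `(w, x_i)`. -/
lemma img_le_of_shad_subset {V : Finset (Fin (n + 1) → ℕ)} {i : Fin (n + 1)} {k : ℕ}
    (h : shad (lev i 0 k V) ⊆ lev i 1 k V) {l} (hl : LInv V l) :
    ((img V l).filter fun p => p.1 i = k).card ≤ (lev i 1 k (shad V)).card := by
  refine le_trans (Finset.card_le_card (t := (lev i 1 k (shad V)).image
      (fun u => (ins i k u, l (ins i (k - 1) u) i))) ?_) card_image_le
  intro p hp
  obtain ⟨hp, hk⟩ := mem_filter.1 hp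
  obtain ⟨w, hw, c, rfl⟩ := mem_img.1 hp
  obtain ⟨j, w', rfl⟩ := exists_ins i w
  rcases Fin.eq_self_or_eq_succAbove i c with rfl | ⟨b, rfl⟩
  · simp only [ins_add_same, ins_same] at hk ⊢
    subst hk
    exact mem_image.2 ⟨w', mem_lev.2 ⟨j, rfl, hw⟩, by simp⟩
  · simp only [ins_add_succAbove, ins_same] at hk ⊢
    subst hk
    have h2 : w' ∈ lev i 0 j (shad V) := mem_lev_zero.2 hw
    rw [lev_shad, zero_add, union_eq_right.2 h] at h2
    obtain ⟨j', rfl, hvV⟩ := mem_lev.1 h2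
    have := hl _ hvV i (i.succAbove b)
    rw [ins_add_same, ins_add_succAbove] at this
    refine mem_image.2 ⟨w' + Pi.single b 1, ?_, ?_⟩
    · rw [lev_shad]
      exact mem_union_left _ (add_mem_shad h2 b)
    · rw [this]; simp

/-- The labelling that separates, inside each product, the pairs `(w, x_i)` for which `w` is
reached only by multiplication by `x_i`. -/
def spec (i : Fin (n + 1)) (W : Finset (Fin (n + 1) → ℕ)) (w : Fin (n + 1) → ℕ)
    (c : Fin (n + 1)) : ℕ :=
  if c = i ∧ (fun b => w (i.succAbove b)) ∉ shad (lev i 0 (w i) W) then 1 else 0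

lemma linv_spec (i : Fin (n + 1)) (W : Finset (Fin (n + 1) → ℕ)) : LInv W (spec i W) := by
  have key : ∀ v ∈ W, ∀ a b, spec i W (v + Pi.single (i.succAbove b) 1) a = 0 := by
    intro v hv a b
    obtain ⟨j, w, rfl⟩ := exists_ins i v
    rw [ins_add_succAbove]
    unfold spec
    rw [if_neg]
    rintro ⟨-, h⟩
    simp only [ins_same, ins_succAbove] at h
    exact h (add_mem_shad (mem_lev_zero.2 hv) b)
  have key2 : ∀ w b, spec i W w (i.succAbove b) = 0 := fun w b => by
    simp [spec, Fin.succAbove_ne]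
  intro v hv a c
  rcases Fin.eq_self_or_eq_succAbove i a with ha | ⟨b, rfl⟩ <;>
  rcases Fin.eq_self_or_eq_succAbove i c with hc | ⟨b', rfl⟩
  · rw [ha, hc]
  · rw [ha, key v hv, key2]
  · rw [hc, key v hv, key2]
  · rw [key v hv, key v hv]

lemma le_img_spec (i : Fin (n + 1)) (k : ℕ) (W : Finset (Fin (n + 1) → ℕ)) :
    (shad (shad (lev i 0 k W))).card + (lev i 2 k W \ shad (lev i 1 k W)).card ≤
      ((img W (spec i W)).filter fun p => p.1 i = k).card := by
  have hinj : ∀ t : ℕ, Function.Injective fun u : Fin n → ℕ => (ins i k u, t) :=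
    fun t a b h => ins_injective i k (Prod.ext_iff.1 h).1
  rw [← card_image_of_injective _ (hinj 0), ← card_image_of_injective (_ \ _) (hinj 1),
    ← card_union_of_disjoint]
  · refine Finset.card_le_card (union_subset ?_ ?_)
    · intro p hp
      obtain ⟨u, hu, rfl⟩ := mem_image.1 hp
      obtain ⟨w, hw, b, rfl⟩ := mem_shad.1 hu
      refine mem_filter.2 ⟨mem_img.2 ⟨ins i k w, ?_, i.succAbove b, ?_⟩, by simp⟩
      · rw [← mem_lev_zero, lev_shad]; exact mem_union_left _ hw
      · rw [ins_add_succAbove]; simp [spec, Fin.succAbove_ne]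
    · intro p hp
      obtain ⟨u, hu, rfl⟩ := mem_image.1 hp
      obtain ⟨hu, hu2⟩ := mem_sdiff.1 hu
      obtain ⟨j, rfl, hj⟩ := mem_lev.1 hu
      rw [show j + 2 = (j + 1) + 1 from rfl, lev_add] at hu2
      refine mem_filter.2 ⟨mem_img.2 ⟨ins i (j + 1) u, ?_, i, ?_⟩, by simp⟩
      · rw [← ins_add_same]; exact add_mem_shad hj i
      · rw [ins_add_same]; simp [spec, hu2]
  · rw [Finset.disjoint_left]
    intro p hp hq
    obtain ⟨u, -, rfl⟩ := mem_image.1 hp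
    obtain ⟨u', -, h⟩ := mem_image.1 hq
    exact absurd (Prod.ext_iff.1 h).2 (by simp)

lemma le_img_prev (i : Fin (n + 1)) (k : ℕ) (W : Finset (Fin (n + 1) → ℕ)) (l) :
    (lev i 1 k (shad W)).card ≤ ((img W l).filter fun p => p.1 i = k).card := by
  refine Finset.card_le_card_of_injOn (fun u => (ins i k u, l (ins i (k - 1) u) i)) ?_ ?_
  · intro u hu
    obtain ⟨j, rfl, hj⟩ := mem_lev.1 (mem_coe.1 hu)
    refine mem_coe.2 (mem_filter.2 ⟨mem_img.2 ⟨_, hj, i, ?_⟩, by simp⟩)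
    rw [ins_add_same]; simp
  · intro a _ b _ h
    exact ins_injective i k (Prod.ext_iff.1 h).1

end phi

/-! ### Compression -/

/-- Macaulay's inequality in `n` variables, together with the statement that equality
forces the formal second shadow to be as small as for the lex segment. -/
def Mac (n : ℕ) : Prop :=
  ∀ (d : ℕ) (V L : Finset (Fin n → ℕ)), Hom d V → Hom d L → IsLex L → V.card = L.card →
    (shad L).card ≤ (shad V).card ∧
      ((shad V).card = (shad L).card → PhiLE V (shad (shad L)).card)

/-- `W` is obtained from `V` by replacing each `x_i`-level by the lex segment of the same
size. -/
def IsComp {n : ℕ} (i : Fin (n + 1)) (V W : Finset (Fin (n + 1) → ℕ)) : Prop :=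
  ∀ k, IsLex (lev i 0 k W) ∧ (lev i 0 k W).card = (lev i 0 k V).card

section comp
variable {n : ℕ} {i : Fin (n + 1)} {d : ℕ} {V W : Finset (Fin (n + 1) → ℕ)}

lemma IsComp.lev_isLex (h : IsComp i V W) (s k : ℕ) : IsLex (lev i s k W) := by
  rcases lt_or_ge k s with hk | hk
  · rw [lev_of_lt i hk]; simp [IsLex]
  · obtain ⟨k, rfl⟩ := Nat.exists_eq_add_of_le' hk
    rw [lev_add]; exact (h k).1

lemma IsComp.card_lev_eq (h : IsComp i V W) (s k : ℕ) :
    (lev i s k V).card = (lev i s k W).card := by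
  rcases lt_or_ge k s with hk | hk
  · rw [lev_of_lt i hk, lev_of_lt i hk]
  · obtain ⟨k, rfl⟩ := Nat.exists_eq_add_of_le' hk
    rw [lev_add, lev_add]; exact (h k).2.symm

lemma IsComp.card_eq (h : IsComp i V W) (hV : Hom d V) (hW : Hom d W) : V.card = W.card := by
  rw [card_lev i hV (Nat.lt_succ_self d), card_lev i hW (Nat.lt_succ_self d)]
  exact Finset.sum_congr rfl fun k _ => h.card_lev_eq 0 k

lemma exists_comp (i : Fin (n + 1)) (hV : Hom d V) : ∃ W, Hom d W ∧ IsComp i V W := by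
  choose L hd hL hc using fun k => exists_lex (hV.lev i 0 k)
  have hempty : ∀ k, d < k → L k = ∅ := by
    intro k hk
    rw [← card_eq_zero, hc, card_eq_zero, eq_empty_iff_forall_notMem]
    intro w hw
    have := hV _ (mem_lev_zero.1 hw)
    rw [sum_ins] at this
    omega
  refine ⟨(range (d + 1)).biUnion fun k => (L k).image (ins i k), ?_, ?_⟩
  · intro v hv
    obtain ⟨k, hk, hv⟩ := mem_biUnion.1 hv
    obtain ⟨w, hw, rfl⟩ := mem_image.1 hv
    have := hd k w hw
    have := mem_range.1 hk
    rw [sum_ins]; omega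
  · intro k
    have : lev i 0 k ((range (d + 1)).biUnion fun k => (L k).image (ins i k)) = L k := by
      ext w
      rw [mem_lev_zero, mem_biUnion]
      constructor
      · rintro ⟨k', -, h⟩
        obtain ⟨w', hw', h⟩ := mem_image.1 h
        obtain ⟨rfl, rfl⟩ := ins_inj.1 h
        exact hw'
      · intro hw
        refine ⟨k, mem_range.2 ?_, mem_image_of_mem _ hw⟩
        by_contra hk
        rw [hempty k (by omega)] at hw
        exact absurd hw (notMem_empty _)
    rw [this]
    exact ⟨hL k, hc k⟩

/-- Consecutive levels of a compressed set are comparable. -/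
lemma IsComp.nested (h : IsComp i V W) (hW : Hom d W) (s k : ℕ) :
    shad (lev i s k W) ⊆ lev i (s + 1) k W ∨ lev i (s + 1) k W ⊆ shad (lev i s k W) := by
  rcases (lev i s k W).eq_empty_or_nonempty with he | ⟨w, hw⟩
  · left; rw [he, shad_empty]; exact empty_subset _
  · refine (h.lev_isLex s k).shad.nested (h.lev_isLex (s + 1) k) (hW.lev i s k).shad ?_
    obtain ⟨j, hj, hw⟩ := mem_lev.1 hw
    have := hW _ hw
    rw [sum_ins] at this
    have h2 := hW.lev i (s + 1) k
    rwa [show d + (s + 1) - k = d + s - k + 1 by omega] at h2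

lemma IsComp.mac (hM : Mac n) (h : IsComp i V W) (hV : Hom d V) (hW : Hom d W) (s k : ℕ) :
    (shad (lev i s k W)).card ≤ (shad (lev i s k V)).card ∧
      ((shad (lev i s k V)).card = (shad (lev i s k W)).card →
        PhiLE (lev i s k V) (shad (shad (lev i s k W))).card) :=
  hM _ _ _ (hV.lev i s k) (hW.lev i s k) (h.lev_isLex s k) (h.card_lev_eq s k)

lemma IsComp.card_lev_shad_le (hM : Mac n) (h : IsComp i V W) (hV : Hom d V) (hW : Hom d W)
    (s k : ℕ) : (lev i s k (shad W)).card ≤ (lev i s k (shad V)).card := by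
  rw [lev_shad, lev_shad]
  rcases h.nested hW s k with h1 | h1
  · rw [union_eq_right.2 h1, ← h.card_lev_eq]
    exact card_le_card subset_union_right
  · rw [union_eq_left.2 h1]
    exact (h.mac hM hV hW s k).1.trans (card_le_card subset_union_left)

lemma IsComp.card_shad_le (hM : Mac n) (h : IsComp i V W) (hV : Hom d V) (hW : Hom d W) :
    (shad W).card ≤ (shad V).card := by
  rw [card_lev i hV.shad (Nat.lt_succ_self _), card_lev i hW.shad (Nat.lt_succ_self _)]
  exact Finset.sum_le_sum fun k _ => h.card_lev_shad_le hM hV hW 0 k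

lemma IsComp.card_lev_shad_eq (hM : Mac n) (h : IsComp i V W) (hV : Hom d V) (hW : Hom d W)
    (he : (shad V).card = (shad W).card) (s k : ℕ) :
    (lev i s k (shad W)).card = (lev i s k (shad V)).card := by
  rcases lt_or_ge k s with hk | hk
  · rw [lev_of_lt i hk, lev_of_lt i hk]
  · obtain ⟨k, rfl⟩ := Nat.exists_eq_add_of_le' hk
    rw [lev_add, lev_add]
    have hN : d + 1 < d + 2 + k := by omega
    rw [card_lev i hV.shad hN, card_lev i hW.shad hN] at he
    exact (Finset.sum_eq_sum_iff_of_le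
      fun k _ => h.card_lev_shad_le hM hV hW 0 k).1 he.symm k (mem_range.2 (by omega))

/-- Compression that preserves the size of the shadow does not decrease the size of the
formal second shadow. -/
lemma IsComp.phiLE (hM : Mac n) (h : IsComp i V W) (hV : Hom d V) (hW : Hom d W)
    (he : (shad V).card = (shad W).card) {N : ℕ} (hN : PhiLE W N) : PhiLE V N := by
  intro l hl
  refine le_trans ?_ (hN _ (linv_spec i W))
  rw [card_img_lev i hV (Nat.lt_succ_self _), card_img_lev i hW (Nat.lt_succ_self _)]
  refine Finset.sum_le_sum fun k _ => ?_
  have e0 := h.card_lev_shad_eq hM hV hW he 0 k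
  rw [lev_shad, lev_shad, zero_add] at e0
  have m0 := h.mac hM hV hW 0 k
  rcases h.nested hW 0 k with h1 | h1
  · have h2 : shad (lev i 0 k V) ⊆ lev i 1 k V := by
      rw [union_eq_right.2 h1, ← h.card_lev_eq] at e0
      have := Finset.eq_of_subset_of_card_le
        (subset_union_right (s₁ := shad (lev i 0 k V)) (s₂ := lev i 1 k V)) e0.ge
      exact union_eq_right.1 this.symm
    refine (img_le_of_shad_subset h2 hl).trans ?_
    rw [← h.card_lev_shad_eq hM hV hW he]
    exact le_img_prev i k W _
  · rw [union_eq_left.2 h1] at e0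
    have h2 : lev i 1 k V ⊆ shad (lev i 0 k V) := by
      have := Finset.eq_of_subset_of_card_le
        (subset_union_left (s₁ := shad (lev i 0 k V)) (s₂ := lev i 1 k V))
        (e0.ge.trans m0.1)
      exact union_eq_left.1 this.symm
    rw [union_eq_left.2 h2] at e0
    refine (img_le_of_prev_subset h2 (m0.2 e0.symm) hl).trans ?_
    refine le_trans ?_ (le_img_spec i k W)
    have e1 := h.card_lev_shad_eq hM hV hW he 1 k
    rw [lev_shad, lev_shad, union_comm, union_comm (shad (lev i 1 k V)),
      ← card_sdiff_add_card, ← card_sdiff_add_card] at e1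
    have m1 := (h.mac hM hV hW 1 k).1
    simp only [Nat.reduceAdd] at e1
    omega

end comp

/-! ### Stable sets -/

section stable
variable {n : ℕ} {d : ℕ}

/-- Stability at the last variable, expressed through levels: replacing a factor `x_n` of an
element of `W` by any other variable gives an element of `W`. -/
def Stable (W : Finset (Fin (n + 1) → ℕ)) : Prop :=
  ∀ k, shad (lev (Fin.last n) 0 (k + 1) W) ⊆ lev (Fin.last n) 0 k W

/-- For a stable set the new elements of the shadow are those not divisible by the last
variable. -/
lemma Stable.card_shad {W : Finset (Fin (n + 1) → ℕ)} (h : Stable W) (hW : Hom d W) :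
    (shad W).card = W.card + (shad (lev (Fin.last n) 0 0 W)).card := by
  rw [card_lev (Fin.last n) hW.shad (Nat.lt_succ_self _),
    card_lev (Fin.last n) hW (Nat.lt_succ_self _), Finset.sum_range_succ']
  congr 1
  · refine Finset.sum_congr rfl fun k _ => ?_
    rw [lev_shad, zero_add, lev_add _ 1 k, union_eq_right.2 (h k)]
  · rw [lev_shad, zero_add, lev_of_lt (s := 1) _ Nat.zero_lt_one, union_empty]

lemma Stable.phiLE {W : Finset (Fin (n + 1) → ℕ)} (h : Stable W) (hW : Hom d W) {N : ℕ}
    (hN : PhiLE (lev (Fin.last n) 0 0 W) N) : PhiLE W ((shad W).card + N) := by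
  intro l hl
  rw [card_img_lev (Fin.last n) hW (Nat.lt_succ_self _), Finset.sum_range_succ',
    card_lev (Fin.last n) hW.shad (N := d + 2) (by omega)]
  refine add_le_add (Finset.sum_le_sum fun k _ => ?_) ?_
  · refine (img_le_of_shad_subset ?_ hl).trans ?_
    · rw [lev_add _ 1 k]; exact h k
    · rw [lev_add _ 1 k]
  · refine (img_le_of_prev_subset ?_ hN hl).trans ?_
    · rw [lev_of_lt _ (by omega)]; exact empty_subset _
    · rw [lev_of_lt _ (by omega)]; simp

lemma IsLex.lev {L : Finset (Fin (n + 1) → ℕ)} (hL : IsLex L) (i : Fin (n + 1)) (k : ℕ) :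
    IsLex (lev i 0 k L) := by
  intro w hw u hd hle
  rw [mem_lev_zero] at hw ⊢
  exact hL _ hw _ (by rw [sum_ins, sum_ins, hd]) (ins_le_iff.2 hle)

/-- Replacing the last variable by any other one is an increase in the lexicographic order. -/
lemma ins_last_le (k : ℕ) (w : Fin n → ℕ) (b : Fin n) :
    toLex (ins (Fin.last n) (k + 1) w) ≤ toLex (ins (Fin.last n) k (w + Pi.single b 1)) := by
  have hs : ∀ b : Fin n, Fin.castSucc b = (Fin.last n).succAbove b := fun b => by simp
  refine lex_le_of (by rw [sum_ins, sum_ins, sum_add_single]; omega) b.castSucc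
    (fun a ha => ?_) (Or.inl ⟨b.castSucc, le_rfl, ?_⟩)
  · rcases Fin.eq_self_or_eq_succAbove (Fin.last n) a with rfl | ⟨c, rfl⟩
    · exact absurd ha (not_le.2 (Fin.castSucc_lt_last b))
    · simp only [ins_succAbove]; simp
  · rw [hs]; simp only [ins_succAbove]; simp

lemma IsLex.stable {L : Finset (Fin (n + 1) → ℕ)} (hL : IsLex L) : Stable L := by
  intro k u hu
  obtain ⟨w, hw, b, rfl⟩ := mem_shad.1 hu
  rw [mem_lev_zero] at hw ⊢
  exact hL _ hw _ (by rw [sum_ins, sum_ins, sum_add_single]; omega) (ins_last_le k w b)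

lemma Stable.add_mem {W : Finset (Fin (n + 1) → ℕ)} (h : Stable W) (b : Fin n) :
    ∀ (k : ℕ) (w : Fin n → ℕ), w ∈ lev (Fin.last n) 0 k W →
      w + Pi.single b k ∈ lev (Fin.last n) 0 0 W := by
  intro k
  induction k with
  | zero => intro w hw; simpa using hw
  | succ k ih =>
    intro w hw
    have := ih _ (h k (add_mem_shad hw b))
    rwa [add_assoc, ← Pi.single_add, add_comm 1 k] at this

/-- A stable set whose part without the last variable is lex has a part without the last
variable at least as large as that of any lex segment that is not larger. -/
lemma Stable.lev_subset {W L : Finset (Fin (n + 2) → ℕ)} (h : Stable W) (hW : Hom d W)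
    (hL : Hom d L) (hW0 : IsLex (lev (Fin.last (n + 1)) 0 0 W)) (lL : IsLex L)
    (hc : L.card ≤ W.card) :
    lev (Fin.last (n + 1)) 0 0 L ⊆ lev (Fin.last (n + 1)) 0 0 W := by
  by_contra hcon
  obtain ⟨u, hu, huW⟩ := Finset.not_subset.1 hcon
  have hdW := hW.lev (Fin.last (n + 1)) 0 0
  have hdL := hL.lev (Fin.last (n + 1)) 0 0
  have huL := mem_lev_zero.1 hu
  have hss : W ⊆ L := by
    intro v hv
    obtain ⟨k, w, rfl⟩ := exists_ins (Fin.last (n + 1)) v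
    have hmem := h.add_mem (Fin.last n) k w (mem_lev_zero.2 hv)
    have hlt : toLex u < toLex (w + Pi.single (Fin.last n) k) := by
      by_contra hge
      exact huW (hW0 _ hmem u (by rw [hdL u hu, hdW _ hmem]) (not_lt.1 hge))
    obtain ⟨j, hj1, hj2⟩ := lex_lt_iff.1 hlt
    -- the first difference cannot be at the last variable, as the degrees agree
    have hjl : j ≠ Fin.last n := by
      rintro rfl
      have h1 := hdL u hu
      rw [← hdW _ hmem] at h1
      exact absurd h1 (Finset.sum_lt_sum (fun a _ => by
        rcases (Fin.le_last a).eq_or_lt with rfl | ha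
        · exact hj2.le
        · exact (hj1 a ha).le) ⟨_, mem_univ _, hj2⟩).ne
    have hs : ∀ b : Fin (n + 1), Fin.castSucc b = (Fin.last (n + 1)).succAbove b :=
      fun b => by simp
    refine lL _ huL _ (by rw [hW _ hv, hL _ huL]) (le_of_lt (lex_lt_iff.2 ⟨j.castSucc, ?_, ?_⟩))
    · intro a ha
      rcases Fin.eq_self_or_eq_succAbove (Fin.last (n + 1)) a with rfl | ⟨c, rfl⟩
      · exact absurd (ha.trans (Fin.castSucc_lt_last j)) (lt_irrefl _)
      · rw [← hs, Fin.castSucc_lt_castSucc_iff] at ha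
        have := hj1 c ha
        have hcl : c ≠ Fin.last n := (ha.trans_le (Fin.le_last j)).ne
        rw [ins_succAbove, ins_succAbove]
        simpa [Pi.single_apply, hcl] using this
    · rw [hs, ins_succAbove, ins_succAbove]
      simpa [Pi.single_apply, hjl] using hj2
  have := Finset.card_lt_card ((Finset.ssubset_iff_of_subset hss).2
    ⟨_, huL, fun hc => huW (mem_lev_zero.2 hc)⟩)
  omega

end stable

/-! ### Macaulay's inequality -/

section mac
variable {d : ℕ}

lemma lev_shad_zero {n : ℕ} (L : Finset (Fin (n + 1) → ℕ)) (i : Fin (n + 1)) :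
    lev i 0 0 (shad L) = shad (lev i 0 0 L) := by
  rw [lev_shad, zero_add, lev_of_lt (s := 1) _ Nat.zero_lt_one, union_empty]

lemma Mac.of_stable {m : ℕ} (hM : Mac (m + 1)) {W L : Finset (Fin (m + 2) → ℕ)}
    (h : Stable W) (hW0 : IsLex (lev (Fin.last (m + 1)) 0 0 W)) (hW : Hom d W)
    (hL : Hom d L) (lL : IsLex L) (hc : W.card = L.card) :
    (shad L).card ≤ (shad W).card ∧
      ((shad W).card = (shad L).card → PhiLE W (shad (shad L)).card) := by
  have hss := shad_mono (h.lev_subset hW hL hW0 lL hc.ge)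
  have e1 := h.card_shad hW
  have e2 := lL.stable.card_shad hL
  have e3 := lL.shad.stable.card_shad hL.shad
  rw [lev_shad_zero] at e3
  refine ⟨by have := Finset.card_le_card hss; omega, fun he => ?_⟩
  have heq := Finset.eq_of_subset_of_card_le hss (by omega)
  have hd := hW.lev (Fin.last (m + 1)) 0 0
  have := h.phiLE hW ((hM _ _ _ hd hd hW0 rfl).2 rfl)
  rwa [← heq, he, ← e3] at this

lemma mac_zero : Mac 0 := by
  have h : ∀ V : Finset (Fin 0 → ℕ), shad V = ∅ := fun V => by simp [shad]
  intro d V L _ _ _ _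
  refine ⟨by rw [h]; simp, fun _ l _ => ?_⟩
  simp [img]

lemma eq_of_sum_eq {u v : Fin 1 → ℕ} (h : ∑ i, u i = ∑ i, v i) : u = v := by
  funext i
  simpa [Subsingleton.elim i 0] using h

lemma isLex_one (V : Finset (Fin 1 → ℕ)) : IsLex V := by
  intro v hv u hd _
  rwa [eq_of_sum_eq hd]

lemma mac_one : Mac 1 := by
  intro d V L hV hL lL hc
  obtain rfl : V = L :=
    Finset.eq_of_subset_of_card_le ((isLex_one V).subset_of_card lL hV hL hc.le) hc.ge
  refine ⟨le_rfl, fun _ l hl => ?_⟩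
  have h1 := lL.stable.phiLE hV (N := 0) (fun l _ => by simp [img]) l hl
  have h2 := lL.shad.stable.card_shad hV.shad
  omega

lemma card_succ_le_shad {n : ℕ} {V : Finset (Fin (n + 2) → ℕ)} (hne : V.Nonempty) :
    V.card + 1 ≤ (shad V).card := by
  obtain ⟨v, hv, hmax⟩ := Finset.exists_max_image V (fun v => v 0) hne
  have hinj : Function.Injective fun v : Fin (n + 2) → ℕ => v + Pi.single 1 1 :=
    add_left_injective _
  rw [← card_image_of_injective V hinj, ← card_insert_of_notMem (a := v + Pi.single 0 1)]
  · refine Finset.card_le_card (insert_subset (add_mem_shad hv 0) ?_)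
    intro u hu
    obtain ⟨w, hw, rfl⟩ := mem_image.1 hu
    exact add_mem_shad hw 1
  · intro hu
    obtain ⟨w, hw, h⟩ := mem_image.1 hu
    have h0 := congrFun h 0
    have := hmax w hw
    simp at h0
    omega

lemma mac_two : Mac 2 := by
  intro d V L hV hL lL hc
  rcases V.eq_empty_or_nonempty with rfl | hne
  · obtain rfl : L = ∅ := by rw [← card_eq_zero, ← hc, card_empty]
    exact ⟨le_rfl, fun _ l _ => by simp [img, shad_empty]⟩
  have hneL : L.Nonempty := by rw [← card_pos, ← hc, card_pos]; exact hne
  have h1 := card_succ_le_shad hne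
  have h2 := lL.stable.card_shad hL
  have h3 : (shad (lev (Fin.last 1) 0 0 L)).card ≤ 1 := by
    have hd := (hL.lev (Fin.last 1) 0 0).shad
    exact Finset.card_le_one.2 fun a ha b hb => eq_of_sum_eq (by rw [hd a ha, hd b hb])
  refine ⟨by omega, fun he l hl => ?_⟩
  have h4 := card_succ_le_shad hneL
  have h5 : (shad L).card + 1 ≤ (shad (shad L)).card :=
    card_succ_le_shad (card_pos.1 (by omega))
  -- the two halves of the formal second shadow meet at least in the classes of `v x_1 x_2`
  let f : Fin 2 → Finset ((Fin 2 → ℕ) × ℕ) := fun c =>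
    (shad V).image fun w => (w + Pi.single c 1, l w c)
  have h6 : img V l ⊆ f 0 ∪ f 1 := by
    intro p hp
    obtain ⟨w, hw, c, rfl⟩ := mem_img.1 hp
    rw [mem_union]
    fin_cases c
    · exact Or.inl (mem_image.2 ⟨w, hw, rfl⟩)
    · exact Or.inr (mem_image.2 ⟨w, hw, rfl⟩)
  have h7 : V.card ≤ (f 0 ∩ f 1).card := by
    refine Finset.card_le_card_of_injOn
      (fun v => (v + Pi.single 0 1 + Pi.single 1 1, l (v + Pi.single 0 1) 1)) ?_ ?_
    · intro v hv
      refine mem_coe.2 (mem_inter.2 ⟨mem_image.2 ⟨_, add_mem_shad hv 1, ?_⟩,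
        mem_image.2 ⟨_, add_mem_shad hv 0, rfl⟩⟩)
      dsimp only
      rw [add_right_comm, hl v hv 0 1]
    · intro a _ b _ h
      exact add_right_cancel (add_right_cancel (Prod.ext_iff.1 h).1)
  have h8 := Finset.card_union_add_card_inter (f 0) (f 1)
  have h9 := Finset.card_le_card h6
  have h10 : (f 0).card ≤ (shad V).card := card_image_le
  have h11 : (f 1).card ≤ (shad V).card := card_image_le
  omega

open Classical in
/-- The number of monomials of degree `d` that are larger than `v` in the lexicographic
order. -/
noncomputable def rho {n : ℕ} (d : ℕ) (v : Fin n → ℕ) : ℕ :=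
  ((Finset.piAntidiag univ d).filter fun u => toLex v < toLex u).card

lemma rho_lt {n : ℕ} {u v : Fin n → ℕ} (hu : ∑ i, u i = d) (h : toLex v < toLex u) :
    rho d u < rho d v := by
  classical
  refine Finset.card_lt_card ((Finset.ssubset_iff_of_subset ?_).2
    ⟨u, mem_filter.2 ⟨mem_full.2 hu, h⟩, fun hc => lt_irrefl _ (mem_filter.1 hc).2⟩)
  intro w hw
  obtain ⟨h1, h2⟩ := mem_filter.1 hw
  exact mem_filter.2 ⟨h1, h.trans h2⟩

lemma sum_lt_of_exchange {α : Type*} [DecidableEq α] {A B : Finset α} {φ : α → ℕ}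
    (hc : A.card = B.card) (hne : A ≠ B)
    (h : ∀ a ∈ A, a ∉ B → ∀ b ∈ B, b ∉ A → φ a < φ b) : ∑ a ∈ A, φ a < ∑ b ∈ B, φ b := by
  rw [← Finset.sum_sdiff_lt_sum_sdiff]
  have hcd : (A \ B).card = (B \ A).card := by
    have h1 := card_sdiff_add_card_inter A B
    have h2 := card_sdiff_add_card_inter B A
    rw [inter_comm] at h2
    omega
  have hnon : (A \ B).Nonempty := by
    rw [nonempty_iff_ne_empty]
    intro he
    exact hne (Finset.eq_of_subset_of_card_le (sdiff_eq_empty_iff_subset.1 he) hc.ge)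
  obtain ⟨m, hm, hmax⟩ := Finset.exists_max_image _ φ hnon
  obtain ⟨hmA, hmB⟩ := mem_sdiff.1 hm
  calc ∑ a ∈ A \ B, φ a ≤ (A \ B).card • φ m := Finset.sum_le_card_nsmul _ _ _ hmax
    _ < (B \ A).card • (φ m + 1) := by
        rw [← hcd, smul_eq_mul, smul_eq_mul]
        exact Nat.mul_lt_mul_of_pos_left (Nat.lt_succ_self _) (card_pos.2 hnon)
    _ ≤ ∑ b ∈ B \ A, φ b := Finset.card_nsmul_le_sum _ _ _ fun b hb =>
        h m hmA hmB b (mem_sdiff.1 hb).1 (mem_sdiff.1 hb).2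

/-- Compression moves a set towards the lex segment. -/
lemma IsComp.sum_rho_lt {n : ℕ} {i : Fin (n + 1)} {V W : Finset (Fin (n + 1) → ℕ)}
    (h : IsComp i V W) (hV : Hom d V) (hW : Hom d W) {k : ℕ} (hk : ¬ IsLex (lev i 0 k V)) :
    ∑ v ∈ W, rho d v < ∑ v ∈ V, rho d v := by
  have hlev : ∀ j, lev i 0 j W ≠ lev i 0 j V →
      ∑ w ∈ lev i 0 j W, rho d (ins i j w) < ∑ w ∈ lev i 0 j V, rho d (ins i j w) := by
    intro j hj
    refine sum_lt_of_exchange (h j).2 hj fun a ha haV b hb hbW => ?_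
    have hda := hW _ (mem_lev_zero.1 ha)
    refine rho_lt hda (ins_lt ?_)
    by_contra hle
    exact hbW ((h j).1 a ha b (by rw [hV.lev i 0 j b hb, hW.lev i 0 j a ha]) (not_lt.1 hle))
  have hkne : lev i 0 k W ≠ lev i 0 k V := fun he => hk (he ▸ (h k).1)
  have hN : d < d + 1 + k := by omega
  rw [sum_lev i hV hN, sum_lev i hW hN]
  refine Finset.sum_lt_sum (fun j _ => ?_) ⟨k, mem_range.2 (by omega), hlev k hkne⟩
  by_cases hj : lev i 0 j W = lev i 0 j V
  · rw [hj]
  · exact (hlev j hj).le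

/-- In at least three variables a set all of whose levels are lex is stable: exchanging the
last variable for another one takes place inside a level of a third variable. -/
lemma stable_of_lev {m : ℕ} {W : Finset (Fin (m + 3) → ℕ)}
    (h : ∀ i k, IsLex (lev i 0 k W)) : Stable W := by
  intro k u hu
  obtain ⟨w, hw, b, rfl⟩ := mem_shad.1 hu
  rw [mem_lev_zero] at hw ⊢
  have hs : Fin.castSucc b = (Fin.last (m + 2)).succAbove b := by simp
  obtain ⟨i, hi1, hi2⟩ : ∃ i : Fin (m + 3), i ≠ Fin.last (m + 2) ∧ i ≠ b.castSucc := by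
    by_contra hcon
    push Not at hcon
    have : (univ : Finset (Fin (m + 3))) ⊆ {Fin.last (m + 2), b.castSucc} := by
      intro i _
      rw [mem_insert, mem_singleton]
      by_cases hi : i = Fin.last (m + 2)
      · exact Or.inl hi
      · exact Or.inr (hcon i hi)
    have := (Finset.card_le_card this).trans card_le_two
    rw [card_univ, Fintype.card_fin] at this
    omega
  have hle := ins_last_le k w b
  have hsum : ∑ a, ins (Fin.last (m + 2)) k (w + Pi.single b 1) a =
      ∑ a, ins (Fin.last (m + 2)) (k + 1) w a := by
    rw [sum_ins, sum_ins, sum_add_single]; omega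
  have hi : ins (Fin.last (m + 2)) k (w + Pi.single b 1) i =
      ins (Fin.last (m + 2)) (k + 1) w i := by
    rcases Fin.eq_self_or_eq_succAbove (Fin.last (m + 2)) i with rfl | ⟨c, rfl⟩
    · exact absurd rfl hi1
    · have : c ≠ b := fun hc => hi2 (by rw [hs, hc])
      rw [ins_succAbove, ins_succAbove]
      simp [this]
  generalize ins (Fin.last (m + 2)) k (w + Pi.single b 1) = v' at *
  generalize ins (Fin.last (m + 2)) (k + 1) w = v at *
  obtain ⟨j, x, rfl⟩ := exists_ins i v
  obtain ⟨j', x', rfl⟩ := exists_ins i v'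
  rw [ins_same, ins_same] at hi
  subst hi
  rw [sum_ins, sum_ins] at hsum
  exact mem_lev_zero.1 (h i j' x (mem_lev_zero.2 hw) x' (by omega) (ins_le_iff.1 hle))

lemma mac_step {m : ℕ} (hM : Mac (m + 2)) : Mac (m + 3) := by
  intro d V L hV hL lL hc
  induction hp : ∑ v ∈ V, rho d v using Nat.strong_induction_on generalizing V with
  | _ p ih =>
    by_cases hlex : ∀ i k, IsLex (lev i 0 k V)
    · exact hM.of_stable (stable_of_lev hlex) (hlex _ _) hV hL lL hc
    · push Not at hlex
      obtain ⟨i, k, hk⟩ := hlex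
      obtain ⟨W, hW, hcomp⟩ := exists_comp i hV
      have h1 := ih _ (hp ▸ hcomp.sum_rho_lt hV hW hk) W hW
        ((hcomp.card_eq hV hW).symm.trans hc) rfl
      have h2 := hcomp.card_shad_le hM hV hW
      refine ⟨h1.1.trans h2, fun he => ?_⟩
      have h3 := h1.1
      exact hcomp.phiLE hM hV hW (by omega) (h1.2 (by omega))

theorem mac : ∀ n, Mac n
  | 0 => mac_zero
  | 1 => mac_one
  | 2 => mac_two
  | m + 3 => mac_step (mac (m + 2))

end mac

/-! ### The shadow of a lex segment -/

section numeric
variable {n m d : ℕ}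

/-- All monomials of degree `q`. -/
abbrev full (n q : ℕ) : Finset (Fin n → ℕ) := Finset.piAntidiag univ q

/-- The levels of `V` at the first variable, indexed by the degree `q` of the cofactor. -/
lemma card_eq_sum_lev {V : Finset (Fin (n + 1) → ℕ)} (hV : Hom d V) {N : ℕ}
    (hN : ∀ q, N ≤ q → lev 0 q d V = ∅) :
    V.card = ∑ q ∈ range N, (lev 0 q d V).card := by
  have h1 : ∑ q ∈ range (d + 1 + N), (lev 0 q d V).card =
      ∑ q ∈ range N, (lev 0 q d V).card :=
    Finset.eventually_constant_sum (fun q hq => by rw [hN q hq, card_empty]) (by omega)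
  have h2 : ∑ q ∈ range (d + 1 + N), (lev 0 q d V).card =
      ∑ q ∈ range (d + 1), (lev 0 q d V).card :=
    Finset.eventually_constant_sum
      (fun q hq => by rw [lev_of_lt _ (by omega), card_empty]) (by omega)
  rw [← h1, h2, card_lev 0 hV (Nat.lt_succ_self d), ← Finset.sum_range_reflect]
  refine Finset.sum_congr rfl fun q hq => ?_
  have hq' := mem_range.1 hq
  rw [← lev_add 0 q (d.succ - 1 - q) V, show d.succ - 1 - q + q = d by omega]

lemma card_full : ∀ m p : ℕ, (full (m + 1) p).card = (p + m).choose m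
  | 0, p => by
    rw [Nat.choose_zero_right, card_eq_one]
    exact ⟨fun _ => p, by ext v; rw [mem_full, mem_singleton]; exact
      ⟨fun h => eq_of_sum_eq (by simpa using h), fun h => by simp [h]⟩⟩
  | m + 1, p => by
    have hd : Hom p (full (m + 2) p) := fun v hv => mem_full.1 hv
    rw [card_eq_sum_lev hd (N := p + 1) fun q hq => lev_of_lt _ (by omega) _, ← add_assoc,
      ← Nat.sum_range_add_choose]
    refine Finset.sum_congr rfl fun q hq => ?_
    rw [← card_full m q]
    congr 1
    ext w
    have := mem_range.1 hq
    rw [mem_lev, mem_full]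
    constructor
    · rintro ⟨j, hj, h⟩
      rw [mem_full, sum_ins] at h
      omega
    · intro h
      exact ⟨p - q, by omega, by rw [mem_full, sum_ins]; omega⟩

lemma full_nonempty (m q : ℕ) : (full (m + 1) q).Nonempty := by
  rw [← card_pos, card_full]; exact Nat.choose_pos (by omega)

lemma shad_full (n q : ℕ) : shad (full (n + 1) q) = full (n + 1) (q + 1) := by
  ext v
  rw [mem_shad, mem_full]
  constructor
  · rintro ⟨u, hu, a, rfl⟩
    rw [sum_add_single, mem_full.1 hu]
  · intro h
    obtain ⟨a, ha⟩ : ∃ a, 0 < v a := by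
      by_contra hc
      push Not at hc
      rw [Finset.sum_eq_zero fun a _ => by have := hc a; omega] at h
      omega
    obtain ⟨w, rfl⟩ := exists_sub_single ha
    rw [sum_add_single] at h
    exact ⟨w, mem_full.2 (by omega), a, rfl⟩

/-- The first step of the greedy expansion. -/
lemma macUp_add {m p r : ℕ} (hr : r < (p + 1 + m).choose m) :
    macUp (m + 1) ((p + m + 1).choose (m + 1) + r) =
      (p + m + 2).choose (m + 1) + macUp m r := by
  have hp : p + 1 ≤ (p + m + 1).choose (m + 1) := by
    rw [← Nat.sum_range_add_choose]
    calc p + 1 = ∑ _i ∈ range (p + 1), 1 := by simp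
      _ ≤ _ := Finset.sum_le_sum fun i _ => Nat.choose_pos (by omega)
  have hfind : Nat.findGreatest
      (fun a => Nat.choose a (m + 1) ≤ (p + m + 1).choose (m + 1) + r)
      ((p + m + 1).choose (m + 1) + r + m + 1) = p + m + 1 := by
    rw [Nat.findGreatest_eq_iff]
    refine ⟨by omega, fun _ => Nat.le_add_right _ _, fun a ha _ => not_le.2 ?_⟩
    refine lt_of_lt_of_le ?_ (Nat.choose_le_choose (m + 1) (show p + m + 1 + 1 ≤ a by omega))
    have := Nat.choose_succ_succ (p + m + 1) m
    rw [show p + 1 + m = p + m + 1 by ring] at hr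
    rw [Nat.succ_eq_add_one, Nat.succ_eq_add_one] at this
    omega
  rw [macUp, if_neg (by omega)]
  simp only [hfind, Nat.add_sub_cancel_left]

/-- The shadow of a lex segment is counted by the Macaulay operator.  The lex segment
consists of all monomials whose cofactor in the other variables has degree at most `p`,
together with a smaller lex segment of cofactors of degree `p + 1`. -/
theorem card_shad_lex : ∀ (m d : ℕ) (L : Finset (Fin (m + 1) → ℕ)), Hom d L → IsLex L →
    (shad L).card = macUp m L.card
  | 0, d, L, hL, lL => by
    rw [lL.stable.card_shad hL, macUp]
    simp [shad]
  | m + 1, d, L, hL, lL => by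
    rcases L.eq_empty_or_nonempty with rfl | ⟨v0, hv0⟩
    · simp [shad_empty, macUp]
    have hsub : ∀ q, lev 0 q d L ⊆ full (m + 1) q := fun q w hw => by
      have := hL.lev 0 q d w hw
      rw [mem_full]; omega
    -- an element whose cofactor has larger degree forces all smaller degrees to be full
    have hup : ∀ q q', q < q' → (lev 0 q' d L).Nonempty → lev 0 q d L = full (m + 1) q := by
      rintro q q' hq ⟨w, hw⟩
      refine (hsub q).antisymm fun u hu => ?_
      obtain ⟨j, hj, hw⟩ := mem_lev.1 hw
      rw [mem_full] at hu
      refine mem_lev.2 ⟨d - q, by omega, lL _ hw _ ?_ (le_of_lt (lex_lt_iff.2 ⟨0, ?_, ?_⟩))⟩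
      · rw [hL _ hw, sum_ins]; omega
      · intro i hi; exact absurd hi (Fin.not_lt_zero i)
      · rw [ins_same, ins_same]; omega
    have hex : ∃ q, lev 0 q d L ≠ full (m + 1) q :=
      ⟨d + 1, by rw [lev_of_lt _ (by omega)]; exact (full_nonempty m _).ne_empty.symm⟩
    classical
    obtain ⟨t, ht, hmin⟩ : ∃ t, lev 0 t d L ≠ full (m + 1) t ∧
        ∀ q < t, lev 0 q d L = full (m + 1) q :=
      ⟨Nat.find hex, Nat.find_spec hex, fun q hq => not_not.1 (Nat.find_min hex hq)⟩
    have ht0 : t ≠ 0 := by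
      rintro rfl
      refine ht ((hsub 0).antisymm fun u hu => ?_)
      obtain ⟨j, w, rfl⟩ := exists_ins 0 v0
      have hd := hL _ hv0
      rw [sum_ins] at hd
      rw [mem_full] at hu
      by_cases hj : j = d
      · have huw : u = w := by
          have hz : ∀ x : Fin (m + 1) → ℕ, ∑ i, x i = 0 → x = 0 := fun x hx => by
            funext i
            exact Finset.sum_eq_zero_iff.1 hx i (mem_univ i)
          rw [hz u hu, hz w (by omega)]
        exact mem_lev.2 ⟨j, hj, huw ▸ hv0⟩
      · have : (lev 0 (d - j) d L).Nonempty := ⟨w, mem_lev.2 ⟨j, by omega, hv0⟩⟩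
        rw [hup 0 (d - j) (by omega) this, mem_full, hu]
    obtain ⟨p, rfl⟩ := Nat.exists_eq_succ_of_ne_zero ht0
    have hbig : ∀ q, p + 1 < q → lev 0 q d L = ∅ := fun q hq =>
      not_nonempty_iff_eq_empty.1 fun h => ht (hup _ _ hq h)
    have hlt : (lev 0 (p + 1) d L).card < (p + 1 + m).choose m := by
      rw [← card_full]
      exact Finset.card_lt_card ((hsub _).ssubset_of_ne ht)
    have hcard : L.card = (p + m + 1).choose (m + 1) + (lev 0 (p + 1) d L).card := by
      rw [card_eq_sum_lev hL (N := p + 2) fun q hq => hbig q (by omega),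
        Finset.sum_range_succ, ← Nat.sum_range_add_choose]
      congr 1
      refine Finset.sum_congr rfl fun q hq => ?_
      rw [hmin q (mem_range.1 hq), card_full]
    -- multiplying by `x_1` keeps the cofactor, any other variable raises its degree by one
    have hG : ∀ q, lev 0 (q + 1) (d + 1) (shad L) =
        shad (lev 0 q d L) ∪ lev 0 (q + 1) d L := by
      intro q
      have hs : ∀ s, lev 0 (s + 1) (d + 1) L = lev 0 s d L := fun s => by
        ext w; simp [mem_lev, ← add_assoc]
      rw [lev_shad, hs, hs]
    have hG0 : lev 0 0 (d + 1) (shad L) = full (m + 1) 0 := by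
      refine Finset.Subset.antisymm (fun w hw => ?_) ?_
      · have := hL.shad.lev 0 0 (d + 1) w hw
        rw [mem_full]; omega
      · rw [lev_shad, ← hmin 0 (by omega)]
        refine fun w hw => mem_union_right _ ?_
        obtain ⟨j, hj, hw⟩ := mem_lev.1 hw
        exact mem_lev.2 ⟨j, by omega, hw⟩
    have hGfull : ∀ q < p + 2, lev 0 q (d + 1) (shad L) = full (m + 1) q := by
      intro q hq
      rcases q with _ | q
      · exact hG0
      · rw [hG, hmin q (by omega), shad_full]
        exact union_eq_left.2 (hsub _)
    have hcardS : (shad L).card =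
        (p + m + 2).choose (m + 1) + (shad (lev 0 (p + 1) d L)).card := by
      rw [card_eq_sum_lev hL.shad (N := p + 3) fun q hq => ?_, Finset.sum_range_succ,
        show p + m + 2 = (p + 1) + m + 1 by ring, ← Nat.sum_range_add_choose]
      · congr 1
        · refine Finset.sum_congr rfl fun q hq => ?_
          rw [hGfull q (mem_range.1 hq), card_full]
        · rw [hG, hbig (p + 2) (by omega), union_empty]
      · obtain ⟨q, rfl⟩ := Nat.exists_eq_add_of_le' hq
        rw [show q + (p + 3) = (q + p + 2) + 1 by ring, hG, hbig _ (by omega),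
          hbig _ (by omega), shad_empty, union_empty]
    have hlevlex : IsLex (lev 0 (p + 1) d L) := by
      rcases lt_or_ge d (p + 1) with h | h
      · rw [lev_of_lt _ h]; simp [IsLex]
      · obtain ⟨k, rfl⟩ := Nat.exists_eq_add_of_le' h
        rw [lev_add]; exact lL.lev 0 k
    rw [hcardS, hcard, macUp_add hlt,
      card_shad_lex m _ _ (hL.lev 0 (p + 1) d) hlevlex]

end numeric

/-! ### Persistence of the Gotzmann property -/

/-- If `V` is a Gotzmann set of monomials of degree `d` in `K[x_1,…,x_n]`, then
`MV` is also a Gotzmann set, i.e. `|M(MV)| = |MV|^{<n-1>}`. -/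
theorem shad_gotzmann {n d : ℕ} (hn : 0 < n) (V : Finset (Fin n → ℕ))
    (hdeg : ∀ v ∈ V, ∑ i, v i = d)
    (hG : (shad V).card = macUp (n - 1) V.card) :
    (shad (shad V)).card = macUp (n - 1) (shad V).card := by
  obtain ⟨m, rfl⟩ := Nat.exists_eq_succ_of_ne_zero hn.ne'
  rw [Nat.succ_sub_one] at hG ⊢
  have hV : Hom d V := hdeg
  obtain ⟨L, hL, lL, hc⟩ := exists_lex hV
  have h1 : (shad V).card = (shad L).card := by rw [hG, card_shad_lex m d L hL lL, hc]
  have h2 := ((mac _ d V L hV hL lL hc.symm).2 h1).card_le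
  have h3 := (mac _ _ _ _ hV.shad hL.shad lL.shad h1).1
  rw [le_antisymm h2 h3, card_shad_lex m _ _ hL.shad lL.shad, h1]
end

section
/- Let a, b, c, α and n be positive integers. If C(α+n, n) + a = b + c and a < C(α+n, n), b < C(α+n, n), c < C(α+n, n), then C(α+n, n)^{<n>} + a^{<n>} ≤ b^{<n>} + c^{<n>}. -/
/-!
Write `sz n d = C(n+d, n)`, the number of monomials of degree `d` in `n+1` variables. Listing these
monomials in descending lexicographic order and giving `m` the weight `n + 2 - max(m)`, where
`max(m)` is the index of the last variable dividing `m` (and `max(1) = 1`), `macUp n h` is the sum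
of the first `h` weights, for `h ≤ sz n d`. Let `W(n,d)` be the resulting list of weights. Splitting
off the monomials divisible by the first variable gives `W(n+1,d+1) = W(n+1,d) ++ W(n,d+1)`
(`macUp_sz_add`). The argument uses only this recursion and its initial values `W(n,0) = [n+1]` and
`W(0,d) = [1]`.

The theorem says that a final segment of `W(n,d)` has the least sum among the intervals of `W(n,d)`
of the same length. This is generalised to intervals of `W(n',d')` with `n ≤ n'` and `d' ≤ d`
(`final_le_interval`) and proved by following the recursion. The interesting case is an interval
that meets both halves of `W(n',d')`; there one compares the pieces separately, using that `macUp m`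
is subadditive (initial segments have the greatest sum) and that `macUp m h` increases with `m`, for
smaller `m`. Subadditivity for the next `m` in turn follows from `final_le_interval`, so the two
facts are established together by induction on `m`.
-/

open Finset

/-- The number of monomials of degree `d` in `n + 1` variables. -/
def sz (n d : ℕ) : ℕ := (n + d).choose n

lemma sz_zero_right (n : ℕ) : sz n 0 = 1 := by simp [sz]

lemma sz_succ_succ (n d : ℕ) : sz (n + 1) (d + 1) = sz (n + 1) d + sz n (d + 1) := by
  have h1 : n + 1 + (d + 1) = (n + 1 + d) + 1 := by ring
  have h2 : n + (d + 1) = n + 1 + d := by ring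
  rw [sz, sz, sz, h1, h2, Nat.choose_succ_succ, add_comm]

lemma sz_pos (n d : ℕ) : 0 < sz n d := Nat.choose_pos (by omega)

lemma sz_mono (n : ℕ) {d e : ℕ} (h : d ≤ e) : sz n d ≤ sz n e :=
  Nat.choose_le_choose n (by omega)

lemma lt_sz (n d : ℕ) : d < sz (n + 1) d := by
  induction d with
  | zero => exact sz_pos _ _
  | succ d ih => have := sz_pos n (d + 1); rw [sz_succ_succ]; omega

lemma macUp_zero_right (n : ℕ) : macUp n 0 = 0 := by
  cases n <;> simp [macUp]

lemma macUp_zero_left (h : ℕ) : macUp 0 h = h := by simp [macUp]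

/-- The greedy step, with the leading binomial coefficient identified by the interval containing
the argument. -/
lemma macUp_succ_of_lt (n d r : ℕ) (hr : sz (n + 1) d + r < sz (n + 1) (d + 1)) :
    macUp (n + 1) (sz (n + 1) d + r) = (n + 1 + d + 1).choose (n + 1) + macUp n r := by
  have hd := lt_sz n d
  have hfind : Nat.findGreatest (fun a => Nat.choose a (n+1) ≤ sz (n + 1) d + r)
      (sz (n + 1) d + r + n + 1) = n + 1 + d := by
    rw [Nat.findGreatest_eq_iff]
    refine ⟨by omega, fun _ => Nat.le_add_right _ _, fun k hk _ hle => ?_⟩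
    have : sz (n + 1) (d + 1) ≤ k.choose (n + 1) := Nat.choose_le_choose _ (by omega)
    omega
  have hne : sz (n + 1) d + r ≠ 0 := by omega
  rw [macUp, if_neg hne]
  simp only [hfind]
  rw [show (n + 1 + d).choose (n + 1) = sz (n + 1) d from rfl, Nat.add_sub_cancel_left]

lemma macUp_succ_sz (n d : ℕ) :
    macUp (n + 1) (sz (n + 1) d) = (n + 1 + d + 1).choose (n + 1) := by
  have := macUp_succ_of_lt n d 0 (by rw [sz_succ_succ]; have := sz_pos n (d + 1); omega)
  simpa [macUp_zero_right] using this

lemma macUp_one (n : ℕ) : macUp n 1 = n + 1 := by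
  cases n with
  | zero => simp [macUp]
  | succ n => simpa [sz_zero_right] using macUp_succ_sz n 0

/-- The recursion `W(n+1,d+1) = W(n+1,d) ++ W(n,d+1)` on lists of weights, in terms of partial
sums. -/
lemma macUp_sz_add (n d r : ℕ) (hr : r ≤ sz n (d + 1)) :
    macUp (n + 1) (sz (n + 1) d + r) = macUp (n + 1) (sz (n + 1) d) + macUp n r := by
  rcases hr.lt_or_eq with h | rfl
  · rw [macUp_succ_of_lt n d r (by rw [sz_succ_succ]; omega), macUp_succ_sz]
  -- At the right end point the greedy representation is a single binomial coefficient.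
  · rw [← sz_succ_succ, macUp_succ_sz, macUp_succ_sz,
      show n + 1 + (d + 1) + 1 = (n + 1 + d + 1) + 1 by ring, Nat.choose_succ_succ, add_comm]
    congr 1
    cases n with
    | zero => simp [sz, macUp]
    | succ n =>
      rw [macUp_succ_sz]
      congr 1
      ring

/-- Subadditivity of `macUp n`: an initial segment of weights has the greatest sum among intervals
of its length. -/
def Subadd (n : ℕ) : Prop := ∀ p q, macUp n (p + q) ≤ macUp n p + macUp n q

lemma macUp_le_succ {m : ℕ} (hs : Subadd m) (h : ℕ) : macUp m h ≤ macUp (m + 1) h := by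
  have key : ∀ d h, h ≤ sz (m + 1) d → macUp m h ≤ macUp (m + 1) h := by
    intro d
    induction d with
    | zero =>
      intro h hh
      rw [sz_zero_right] at hh
      interval_cases h
      · simp [macUp_zero_right]
      · simp [macUp_one]
    | succ d ih =>
      intro h hh
      rcases le_total h (sz (m + 1) d) with hle | hle
      · exact ih h hle
      · obtain ⟨r, rfl⟩ := Nat.exists_eq_add_of_le hle
        rw [sz_succ_succ] at hh
        have h1 := hs (sz (m + 1) d) r
        have h2 := ih _ le_rfl
        rw [macUp_sz_add m d r (by omega)]
        omega
  exact key h h (lt_sz m h).le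

lemma macUp_mono_left {M : ℕ} (hs : ∀ m < M, Subadd m) {m m' : ℕ} (hm : m ≤ m') (hM : m' ≤ M)
    (h : ℕ) : macUp m h ≤ macUp m' h := by
  induction m', hm using Nat.le_induction with
  | base => exact le_rfl
  | succ k hk ih => exact (ih (by omega)).trans (macUp_le_succ (hs k (by omega)) h)

/-- The last `L` weights of `W(n,d)` have sum at most that of any `L` consecutive weights of
`W(n',d')`, when `n ≤ n'` and `d' ≤ d`. Here `t` is the start of the final segment and `s` that of
the interval. -/
lemma final_le_interval {M : ℕ} (hs : ∀ m < M, Subadd m) (k : ℕ) :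
    ∀ n n' d d' s t L, n + n' + d' ≤ k → n ≤ n' → n' ≤ M → d' ≤ d →
      s + L ≤ sz n' d' → t + L = sz n d →
      macUp n (t + L) + macUp n' s ≤ macUp n t + macUp n' (s + L) := by
  induction k using Nat.strong_induction_on with
  | _ k ih =>
  intro n n' d d' s t L hk hn hM hd hsL htL
  -- The induction hypothesis with its measure freed from `k`.
  have IH : ∀ n₁ n₁' d₁ d₁' s t L, n₁ + n₁' + d₁' < n + n' + d' → n₁ ≤ n₁' → n₁' ≤ M → d₁' ≤ d₁ →
      s + L ≤ sz n₁' d₁' → t + L = sz n₁ d₁ →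
      macUp n₁ (t + L) + macUp n₁' s ≤ macUp n₁ t + macUp n₁' (s + L) :=
    fun n₁ n₁' d₁ d₁' s t L h => ih (n₁ + n₁' + d₁') (by omega) n₁ n₁' d₁ d₁' s t L le_rfl
  clear ih hk
  rcases Nat.eq_zero_or_pos L with rfl | hL
  · simp
  rcases d' with _ | e'
  · rw [sz_zero_right] at hsL
    obtain rfl : s = 0 := by omega
    obtain rfl : L = 1 := by omega
    rcases n with _ | n
    · simp only [macUp_zero_left, macUp_zero_right, zero_add, macUp_one]
      omega
    rcases d with _ | e
    · rw [sz_zero_right] at htL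
      obtain rfl : t = 0 := by omega
      simp only [macUp_zero_right, zero_add, macUp_one]
      omega
    · rw [sz_succ_succ] at htL
      have := sz_pos n (e + 1)
      obtain ⟨t', rfl⟩ := Nat.exists_eq_add_of_le (show sz (n + 1) e ≤ t by omega)
      have h := IH n n' (e + 1) 0 0 t' 1 (by omega) (by omega) hM (by omega)
        (by rw [sz_zero_right]) (by omega)
      rw [add_assoc, macUp_sz_add n e _ (by omega), macUp_sz_add n e _ (by omega)]
      omega
  obtain ⟨e, rfl⟩ : ∃ e, d = e + 1 := ⟨d - 1, by omega⟩
  rcases n' with _ | m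
  · obtain rfl : n = 0 := by omega
    simp only [macUp_zero_left]
    omega
  rw [sz_succ_succ] at hsL
  have hmono : sz m (e' + 1) ≤ sz m (e + 1) := sz_mono m hd
  by_cases h1 : s + L ≤ sz (m + 1) e'
  · exact IH n (m + 1) (e + 1) e' s t L (by omega) hn hM (by omega) h1 htL
  by_cases h2 : sz (m + 1) e' ≤ s
  · obtain ⟨s', rfl⟩ := Nat.exists_eq_add_of_le h2
    rw [add_assoc (sz (m + 1) e'), macUp_sz_add m e' _ (by omega), macUp_sz_add m e' _ (by omega)]
    rcases Nat.lt_or_ge m n with hmn | hmn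
    · obtain rfl : n = m + 1 := by omega
      rw [sz_succ_succ] at htL
      obtain ⟨t', rfl⟩ := Nat.exists_eq_add_of_le (show sz (m + 1) e ≤ t by omega)
      have h := IH m m (e + 1) (e' + 1) s' t' L (by omega) le_rfl (by omega) hd
        (by omega) (by omega)
      rw [add_assoc (sz (m + 1) e), macUp_sz_add m e _ (by omega), macUp_sz_add m e _ (by omega)]
      omega
    · have h := IH n m (e + 1) (e' + 1) s' t L (by omega) hmn (by omega) hd (by omega) htL
      omega
  -- The interval meets both halves of `W(m+1,e'+1)`, in `L₁` and `L₂` weights respectively.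
  obtain ⟨L₁, hL₁⟩ := Nat.exists_eq_add_of_le (show s ≤ sz (m + 1) e' by omega)
  obtain ⟨L₂, rfl⟩ := Nat.exists_eq_add_of_le (show L₁ ≤ L by omega)
  have hsplit : macUp (m + 1) (s + (L₁ + L₂)) = macUp (m + 1) (s + L₁) + macUp m L₂ := by
    rw [← add_assoc, ← hL₁, macUp_sz_add m e' _ (by omega)]
  rw [hsplit]
  rcases Nat.lt_or_ge m n with hmn | hmn
  · obtain rfl : n = m + 1 := by omega
    rw [sz_succ_succ] at htL
    by_cases h3 : L₁ + L₂ ≤ sz m (e + 1)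
    · obtain ⟨t', rfl⟩ := Nat.exists_eq_add_of_le (show sz (m + 1) e ≤ t by omega)
      have h := IH m (m + 1) (e + 1) e' s (t' + L₂) L₁ (by omega) (by omega) hM (by omega)
        (by omega) (by omega)
      have hsub := hs m (by omega) t' L₂
      rw [add_assoc (sz (m + 1) e), macUp_sz_add m e _ (by omega), macUp_sz_add m e _ (by omega),
        show t' + (L₁ + L₂) = t' + L₂ + L₁ by ring]
      omega
    -- The final segment contains all of `W(m,e+1)`, whose first `L₂` weights cancel against the
    -- second part of the interval.
    · obtain ⟨y, hy⟩ := Nat.exists_eq_add_of_le (show sz m (e + 1) ≤ L₁ + L₂ by omega)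
      obtain ⟨x, hx⟩ := Nat.exists_eq_add_of_le (show L₂ ≤ sz m (e + 1) by omega)
      obtain rfl : L₁ = y + x := by omega
      have ha := IH (m + 1) (m + 1) e e' s t y (by omega) le_rfl hM (by omega) (by omega) (by omega)
      have hb := IH m (m + 1) (e + 1) e' (s + y) L₂ x (by omega) (by omega) hM (by omega)
        (by omega) (by omega)
      have hc : macUp (m + 1) (t + (y + x + L₂)) = macUp (m + 1) (t + y) + macUp m (L₂ + x) := by
        rw [show t + (y + x + L₂) = sz (m + 1) e + (L₂ + x) by omega,
          macUp_sz_add m e _ (by omega), show t + y = sz (m + 1) e by omega]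
      rw [hc, ← add_assoc s]
      omega
  · have h := IH n (m + 1) (e + 1) e' s (t + L₂) L₁ (by omega) hn hM (by omega)
      (by omega) (by omega)
    have hsub := hs n (by omega) t L₂
    have hle := macUp_mono_left hs hmn (by omega) L₂
    rw [show t + (L₁ + L₂) = t + L₂ + L₁ by ring]
    omega

lemma subadd (M : ℕ) : Subadd M := by
  induction M using Nat.strong_induction_on with
  | _ M hs =>
  rcases M with _ | m
  · intro p q
    simp [macUp_zero_left]
  have key : ∀ d p q, p + q ≤ sz (m + 1) d →
      macUp (m + 1) (p + q) ≤ macUp (m + 1) p + macUp (m + 1) q := by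
    intro d
    induction d with
    | zero =>
      intro p q h
      rw [sz_zero_right] at h
      rcases Nat.eq_zero_or_pos p with rfl | hp
      · simp
      · obtain rfl : q = 0 := by omega
        simp
    | succ e ih =>
      -- If one summand is at least `sz (m+1) e`, the claim reduces to subadditivity for `m`.
      have large : ∀ p q, sz (m + 1) e ≤ p → p + q ≤ sz (m + 1) (e + 1) →
          macUp (m + 1) (p + q) ≤ macUp (m + 1) p + macUp (m + 1) q := by
        intro p q hp h
        obtain ⟨p', rfl⟩ := Nat.exists_eq_add_of_le hp
        rw [sz_succ_succ] at h
        have h1 := hs m (by omega) p' q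
        have h2 := macUp_le_succ (hs m (by omega)) q
        rw [add_assoc, macUp_sz_add m e _ (by omega), macUp_sz_add m e _ (by omega)]
        omega
      intro p q h
      by_cases h1 : p + q ≤ sz (m + 1) e
      · exact ih p q h1
      by_cases h2 : sz (m + 1) e ≤ p
      · exact large p q h2 h
      by_cases h3 : sz (m + 1) e ≤ q
      · have := large q p h3 (by omega)
        rw [add_comm p q]
        omega
      rw [sz_succ_succ] at h
      obtain ⟨r, hr⟩ := Nat.exists_eq_add_of_le (show sz (m + 1) e ≤ p + q by omega)
      obtain ⟨L, hL⟩ := Nat.exists_eq_add_of_le (show p ≤ sz (m + 1) e by omega)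
      obtain rfl : q = r + L := by omega
      have hG := final_le_interval hs _ (m + 1) (m + 1) e e r p L le_rfl le_rfl le_rfl le_rfl
        (by omega) hL.symm
      have hle := macUp_le_succ (hs m (by omega)) r
      rw [hr, macUp_sz_add m e _ (by omega), hL]
      omega
  intro p q
  exact key (p + q) p q (lt_sz m _).le

/-- If `C(α+n, n) + a = b + c` with `a, b, c < C(α+n, n)` (all positive), then
`C(α+n, n)^{<n>} + a^{<n>} ≤ b^{<n>} + c^{<n>}`. -/
theorem macUp_choose_add_le (a b c α n : ℕ)
    (ha : 0 < a) (hb : 0 < b) (hc : 0 < c) (hα : 0 < α) (hn : 0 < n)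
    (heq : (α + n).choose n + a = b + c)
    (ha' : a < (α + n).choose n) (hb' : b < (α + n).choose n)
    (hc' : c < (α + n).choose n) :
    macUp n ((α + n).choose n) + macUp n a ≤ macUp n b + macUp n c := by
  have hsz : (α + n).choose n = sz n α := by rw [sz, add_comm]
  rw [hsz] at hb' hc' heq ⊢
  -- Compare the final segment `[b, sz n α)` with the interval `[a, c)`.
  obtain ⟨L, hL⟩ := Nat.exists_eq_add_of_le hb'.le
  obtain rfl : c = a + L := by omega
  have h := final_le_interval (fun m _ => subadd m) _ n n α α a b L le_rfl le_rfl le_rfl le_rfl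
    (by omega) hL.symm
  rwa [← hL] at h
end
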